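/- Let (X, m) be an iterative midpoint set. Then there exists exactly one superconvex structure Σ' on the set X such that ½·x + ½·y = m(x,y) for all x, y ∈ X. Moreover this superconvex structure is iterative, and if (X, m) is cancellative then the superconvex structure is cancellative. -/

import Mathlib

/-- A midpoint operation: idempotent, commutative, satisfying transposition. -/
def IsMidpoint {A : Type} (m : A → A → A) : Prop :=
  (∀ x, m x x = x) ∧ (∀ x y, m x y = m y x) ∧
    (∀ x y z w, m (m x y) (m z w) = m (m x z) (m y w))

/-- Cancellation: `m x y = m x z` implies `y = z`. -/
def Cancellative {A : Type} (m : A → A → A) : Prop :=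
  ∀ x y z, m x y = m x z → y = z

/-- Iterativity in the category of sets. -/
def Iterative {A : Type} (m : A → A → A) : Prop :=
  ∀ (X : Type) (c : X → A × X), ∃! u : X → A, ∀ x, u x = m (c x).1 (u (c x).2)

/-- The unfolding property of an infinitary operation `M` with respect to `m`. -/
def Unfolding {A : Type} (m : A → A → A) (M : (ℕ → A) → A) : Prop :=
  ∀ x : ℕ → A, M x = m (x 0) (M fun i => x (i + 1))

/-- The canonicity property of an infinitary operation `M` with respect to `m`. -/
def Canonicity {A : Type} (m : A → A → A) (M : (ℕ → A) → A) : Prop :=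
  ∀ x y : ℕ → A, (∀ i, y i = m (x i) (y (i + 1))) → y 0 = M x

/-- A superconvex weight: a nonnegative sequence summing to 1. -/
def IsWeight (lam : ℕ → ℝ) : Prop := (∀ i, 0 ≤ lam i) ∧ ∑' i, lam i = 1

/-- A superconvex structure on `X`: an operation of countable convex combination,
satisfying the projection and composition laws (on genuine weights). -/
structure SuperconvexStr (X : Type) where
  comb : (ℕ → ℝ) → (ℕ → X) → X
  proj : ∀ lam, IsWeight lam → ∀ k, lam k = 1 → (∀ i, i ≠ k → lam i = 0) →
    ∀ x, comb lam x = x k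
  compos : ∀ lam, IsWeight lam → ∀ mu : ℕ → ℕ → ℝ, (∀ i, IsWeight (mu i)) →
    ∀ x : ℕ → X, comb lam (fun i => comb (mu i) x) = comb (fun j => ∑' i, lam i * mu i j) x

/-- The binary combination `λ·x + (1-λ)·y`. -/
def SuperconvexStr.pair {X : Type} (S : SuperconvexStr X) (lam : ℝ) (x y : X) : X :=
  S.comb (fun i => if i = 0 then lam else if i = 1 then 1 - lam else 0)
    (fun i => if i = 0 then x else y)

/-- Cancellativity of a superconvex structure. -/
def SuperconvexStr.Cancellative {X : Type} (S : SuperconvexStr X) : Prop :=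
  ∀ lam : ℝ, 0 < lam → lam < 1 → ∀ x y z : X, S.pair lam x z = S.pair lam y z → x = y

/-- Iterativity of a superconvex structure. -/
def SuperconvexStr.Iterative {X : Type} (S : SuperconvexStr X) : Prop :=
  ∀ (x y : ℕ → X) (lam mu : ℕ → ℝ),
    (∀ i, 0 < lam i ∧ lam i < 1) → (∀ i, 0 < mu i ∧ mu i < 1) →
    (∀ i, lam i + mu i = 1) →
    (∀ i, x i = S.pair (lam i) (y i) (x (i + 1))) →
    Filter.Tendsto (fun n => ∏ j ∈ Finset.range n, mu j) Filter.atTop (nhds 0) →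
    x 0 = S.comb (fun i => lam i * ∏ j ∈ Finset.range i, mu j) y

/-!
The set `Weight` of superconvex weights is the free iterative midpoint set on the unit weights:
every sequence `x` in an iterative midpoint set extends uniquely to a midpoint homomorphism on it.
The graph of the extension is generated by the pairs (unit weight, `x i`) under finite midpoints
followed by infinite midpoint iteration. To see that it is single-valued, fix for each weight `l` a
dyadic mean `d` of unit weights with `d ≤ 2 * l`, strictly on the support of `d`. Because of this
slack, rearranging a sufficiently deep midpoint tree of any point `(l, a)` of the graph collects `d`
in one half, whence `a = m (value of d) a'` for another point `(2 * l - d, a')`. As `d` depends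
only on `l`, any two values over `l` agree by coinduction.

Both the composition law and the uniqueness of the superconvex structure compare two midpoint
homomorphisms on `Weight`. Iterativity and cancellation for general weights reduce to the midpoint
by extracting a summand of weight at least one half, respectively of weight a power of one half.
-/

namespace IsMidpoint

variable {A B : Type} {m : A → A → A} {m' : B → B → B}

theorem idem (hm : IsMidpoint m) (a : A) : m a a = a := hm.1 a

theorem comm (hm : IsMidpoint m) (a b : A) : m a b = m b a := hm.2.1 a b

theorem transpose (hm : IsMidpoint m) (a b c d : A) : m (m a b) (m c d) = m (m a c) (m b d) :=
  hm.2.2 a b c d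

end IsMidpoint

/-- The componentwise midpoint operation on a product. -/
def prodMid {A B : Type} (m : A → A → A) (m' : B → B → B) (p q : A × B) : A × B :=
  (m p.1 q.1, m' p.2 q.2)

theorem IsMidpoint.prodMid {A B : Type} {m : A → A → A} {m' : B → B → B} (hm : IsMidpoint m)
    (hm' : IsMidpoint m') : IsMidpoint (prodMid m m') :=
  ⟨fun _ => Prod.ext (hm.idem _) (hm'.idem _), fun _ _ => Prod.ext (hm.comm _ _) (hm'.comm _ _),
    fun _ _ _ _ => Prod.ext (hm.transpose _ _ _ _) (hm'.transpose _ _ _ _)⟩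

theorem Iterative.eq_of_coinduction {A : Type} {m : A → A → A} (hit : Iterative m)
    (R : A → A → Prop)
    (hR : ∀ a b, R a b → ∃ c a' b', R a' b' ∧ a = m c a' ∧ b = m c b') {a b : A} (hab : R a b) :
    a = b := by
  have unfold_pair : ∀ p : {p : A × A // R p.1 p.2}, ∃ (c : A) (q : {p : A × A // R p.1 p.2}),
      p.1.1 = m c q.1.1 ∧ p.1.2 = m c q.1.2 := by
    rintro ⟨⟨a, b⟩, h⟩
    obtain ⟨c, a', b', h', rfl, rfl⟩ := hR a b h
    exact ⟨c, ⟨(a', b'), h'⟩, rfl, rfl⟩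
  choose head next h₁ h₂ using unfold_pair
  exact congrFun ((hit _ fun p => (head p, next p)).unique h₁ h₂) ⟨(a, b), hab⟩

section MultisetLemmas

variable {α : Type*}

theorem exists_le_card_eq {s : Multiset α} {k : ℕ} (h : k ≤ s.card) :
    ∃ t ≤ s, t.card = k := by
  induction s using Quotient.inductionOn with
  | h l => exact ⟨l.take k, (List.take_sublist k l).subperm, by simpa using h⟩

theorem exists_add_add_of_add_eq_add {s t u v : Multiset α} (h : s + t = u + v) :
    ∃ su sv tu tv, s = su + sv ∧ t = tu + tv ∧ u = su + tu ∧ v = sv + tv := by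
  classical
  refine ⟨s ∩ u, s - u, u - s, t - (u - s), ?_, ?_, ?_, ?_⟩ <;>
  · ext a
    have := congrArg (Multiset.count a) h
    simp only [Multiset.count_add, Multiset.count_sub, Multiset.count_inter] at this ⊢
    omega

end MultisetLemmas

/-- `a` is the midpoint-tree average of the `2 ^ n` elements of the multiset `s`: the leaves of
some complete binary tree of depth `n`, listed with multiplicity, form `s`, and evaluating the tree
with `m` gives `a`. A relation, since independence of the arrangement of the leaves is
a theorem (`IsDyadicMean.unique`). -/
def IsDyadicMean {A : Type} (m : A → A → A) : ℕ → Multiset A → A → Prop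
  | 0, s, a => s = {a}
  | n + 1, s, a => ∃ t u b c, IsDyadicMean m n t b ∧ IsDyadicMean m n u c ∧ s = t + u ∧ a = m b c

namespace IsDyadicMean

variable {A : Type} {m : A → A → A} {n : ℕ} {s t u v : Multiset A} {a b : A}

theorem mid (hs : IsDyadicMean m n s a) (ht : IsDyadicMean m n t b) :
    IsDyadicMean m (n + 1) (s + t) (m a b) :=
  ⟨s, t, a, b, hs, ht, rfl, rfl⟩

theorem card_eq (h : IsDyadicMean m n s a) : s.card = 2 ^ n := by
  induction n generalizing s a with
  | zero => obtain rfl := h; simp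
  | succ n ih =>
    obtain ⟨t, u, b, c, ht, hu, rfl, rfl⟩ := h
    rw [Multiset.card_add, ih ht, ih hu, pow_succ, mul_two]

theorem exists_of_card_eq (h : s.card = 2 ^ n) : ∃ a, IsDyadicMean m n s a := by
  induction n generalizing s with
  | zero => exact Multiset.card_eq_one.1 h
  | succ n ih =>
    obtain ⟨t, hts, ht⟩ := exists_le_card_eq (s := s) (k := 2 ^ n) (by rw [h, pow_succ]; omega)
    obtain ⟨u, rfl⟩ := Multiset.le_iff_exists_add.1 hts
    obtain ⟨a, ha⟩ := ih ht
    obtain ⟨b, hb⟩ := ih (s := u) (by rw [Multiset.card_add, pow_succ] at h; omega)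
    exact ⟨_, ha.mid hb⟩

theorem nsmul (hm : IsMidpoint m) (h : IsDyadicMean m n s a) (k : ℕ) :
    IsDyadicMean m (n + k) (2 ^ k • s) a := by
  induction k with
  | zero => simpa using h
  | succ k ih =>
    rw [pow_succ, mul_nsmul, two_nsmul, ← hm.idem a]
    exact ih.mid ih

theorem mem_of_forall_mem {P : Set A} (hP : ∀ a ∈ P, ∀ b ∈ P, m a b ∈ P)
    (h : IsDyadicMean m n s a) (hs : ∀ b ∈ s, b ∈ P) : a ∈ P := by
  induction n generalizing s a with
  | zero => obtain rfl := h; exact hs a (Multiset.mem_singleton_self a)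
  | succ n ih =>
    obtain ⟨t, u, b, c, ht, hu, rfl, rfl⟩ := h
    exact hP _ (ih ht fun _ h => hs _ (Multiset.mem_add.2 (.inl h)))
      _ (ih hu fun _ h => hs _ (Multiset.mem_add.2 (.inr h)))

theorem mul_two_pow_eq_sum {f : A → ℝ} (hf : ∀ a b, f (m a b) = (f a + f b) / 2)
    (h : IsDyadicMean m n s a) : f a * 2 ^ n = (s.map f).sum := by
  induction n generalizing s a with
  | zero => obtain rfl := h; simp
  | succ n ih =>
    obtain ⟨t, u, b, c, ht, hu, rfl, rfl⟩ := h
    rw [Multiset.map_add, Multiset.sum_add, ← ih ht, ← ih hu, hf]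
    ring

theorem exists_mid_of_cons (hm : IsMidpoint m) {x : A} (h : IsDyadicMean m (n + 1) (x ::ₘ s) a) :
    ∃ t u b c, s = t + u ∧ IsDyadicMean m n (x ::ₘ t) b ∧ IsDyadicMean m n u c ∧ a = m b c := by
  obtain ⟨t, u, b, c, ht, hu, hs, rfl⟩ := h
  rcases Multiset.mem_add.1 (hs ▸ Multiset.mem_cons_self x s) with hx | hx
  · obtain ⟨t, rfl⟩ := Multiset.exists_cons_of_mem hx
    rw [Multiset.cons_add, Multiset.cons_inj_right] at hs
    exact ⟨t, u, b, c, hs, ht, hu, rfl⟩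
  · obtain ⟨u, rfl⟩ := Multiset.exists_cons_of_mem hx
    rw [Multiset.add_cons, Multiset.cons_inj_right, add_comm] at hs
    exact ⟨u, t, c, b, hs, hu, ht, hm.comm b c⟩

-- Transposition brings the subtrees containing `x` and `y` next to each other, so that
-- the exchange happens at depth `n`, and then moves them back.
theorem exchange_cons (hm : IsMidpoint m) {x y : A} (ha : IsDyadicMean m n (x ::ₘ s) a)
    (hb : IsDyadicMean m n (y ::ₘ t) b) :
    ∃ a' b', IsDyadicMean m n (y ::ₘ s) a' ∧ IsDyadicMean m n (x ::ₘ t) b' ∧ m a b = m a' b' := by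
  induction n generalizing s t a b with
  | zero =>
    obtain ⟨rfl, rfl⟩ := (Multiset.singleton_eq_cons_iff s).1 (Eq.symm ha)
    obtain ⟨rfl, rfl⟩ := (Multiset.singleton_eq_cons_iff t).1 (Eq.symm hb)
    exact ⟨b, a, rfl, rfl, hm.comm a b⟩
  | succ n ih =>
    obtain ⟨s₁, s₂, a₁, a₂, rfl, ha₁, ha₂, rfl⟩ := exists_mid_of_cons hm ha
    obtain ⟨t₁, t₂, b₁, b₂, rfl, hb₁, hb₂, rfl⟩ := exists_mid_of_cons hm hb
    obtain ⟨a', b', ha', hb', heq⟩ := ih ha₁ hb₁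
    refine ⟨m a' a₂, m b' b₂, ?_, ?_, ?_⟩
    · simpa only [Multiset.cons_add] using ha'.mid ha₂
    · simpa only [Multiset.cons_add] using hb'.mid hb₂
    · rw [hm.transpose, heq, hm.transpose]

theorem exchange (hm : IsMidpoint m) (ha : IsDyadicMean m n (s + u) a)
    (hb : IsDyadicMean m n (t + v) b) (huv : u.card = v.card) :
    ∃ a' b', IsDyadicMean m n (s + v) a' ∧ IsDyadicMean m n (t + u) b' ∧ m a b = m a' b' := by
  induction u using Multiset.induction generalizing v s t a b with
  | empty =>
    obtain rfl := Multiset.card_eq_zero.1 huv.symm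
    exact ⟨a, b, ha, hb, rfl⟩
  | cons x u ih =>
    obtain ⟨y, v, rfl⟩ : ∃ y v', v = y ::ₘ v' := by
      obtain ⟨y, v', hv, -⟩ := Multiset.card_eq_succ_iff.1 (huv.symm.trans (u.card_cons x))
      exact ⟨y, v', hv.symm⟩
    rw [Multiset.add_cons] at ha hb
    obtain ⟨a₁, b₁, ha₁, hb₁, heq₁⟩ := exchange_cons hm ha hb
    rw [← Multiset.cons_add] at ha₁ hb₁
    obtain ⟨a₂, b₂, ha₂, hb₂, heq₂⟩ := ih ha₁ hb₁ (by simpa using huv)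
    rw [Multiset.cons_add, ← Multiset.add_cons] at ha₂ hb₂
    exact ⟨a₂, b₂, ha₂, hb₂, heq₁.trans heq₂⟩

theorem exists_mid_of_add (hm : IsMidpoint m) (h : IsDyadicMean m (n + 1) (s + t) a)
    (hs : s.card = 2 ^ n) :
    ∃ b c, IsDyadicMean m n s b ∧ IsDyadicMean m n t c ∧ a = m b c := by
  obtain ⟨u, v, b, c, hu, hv, heq, rfl⟩ := h
  obtain ⟨su, sv, tu, tv, rfl, rfl, rfl, rfl⟩ := exists_add_add_of_add_eq_add heq
  have hcard : tu.card = sv.card := by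
    have := hu.card_eq
    rw [Multiset.card_add] at hs this
    omega
  rw [add_comm sv tv] at hv
  obtain ⟨b', c', hb', hc', heq'⟩ := exchange hm hu hv hcard
  exact ⟨b', c', hb', add_comm tv tu ▸ hc', heq'⟩

theorem unique (hm : IsMidpoint m) (ha : IsDyadicMean m n s a) (hb : IsDyadicMean m n s b) :
    a = b := by
  induction n generalizing s a b with
  | zero => exact Multiset.singleton_inj.1 (Eq.trans (Eq.symm ha) hb)
  | succ n ih =>
    obtain ⟨t, u, a₁, a₂, ht, hu, rfl, rfl⟩ := ha
    obtain ⟨b₁, b₂, hb₁, hb₂, rfl⟩ := exists_mid_of_add hm hb ht.card_eq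
    rw [ih ht hb₁, ih hu hb₂]

end IsDyadicMean

section Hulls

variable {ι A : Type} {m : A → A → A}

/-- The midpoint subalgebra generated by the family `g`, presented as its dyadic means. -/
def dyadicHull (m : A → A → A) (g : ι → A) : Set A :=
  {a | ∃ n s, IsDyadicMean m n (Multiset.map g s) a}

theorem mem_dyadicHull (g : ι → A) (i : ι) : g i ∈ dyadicHull m g :=
  ⟨0, {i}, Multiset.map_singleton g i⟩

theorem mid_mem_dyadicHull (hm : IsMidpoint m) {g : ι → A} {a b : A} (ha : a ∈ dyadicHull m g)
    (hb : b ∈ dyadicHull m g) : m a b ∈ dyadicHull m g := by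
  obtain ⟨n, s, hs⟩ := ha
  obtain ⟨k, t, ht⟩ := hb
  refine ⟨n + k + 1, 2 ^ k • s + 2 ^ n • t, ?_⟩
  rw [Multiset.map_add, Multiset.map_nsmul, Multiset.map_nsmul]
  exact (hs.nsmul hm k).mid (add_comm k n ▸ ht.nsmul hm n)

theorem dyadicHull_subset {g : ι → A} {P : Set A} (hP : ∀ a ∈ P, ∀ b ∈ P, m a b ∈ P)
    (hg : ∀ i, g i ∈ P) : dyadicHull m g ⊆ P := by
  rintro a ⟨n, s, hs⟩
  refine hs.mem_of_forall_mem hP fun b hb => ?_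
  obtain ⟨i, -, rfl⟩ := Multiset.mem_map.1 hb
  exact hg i

/-- The values of infinite midpoint iterations `m d₀ (m d₁ (m d₂ …))` with all `dᵢ ∈ D`,
defined as the largest set each of whose elements is `m d r` with `d ∈ D` and `r` in the set. -/
def iteratedHull (m : A → A → A) (D : Set A) : Set A :=
  {a | ∃ S : Set A, a ∈ S ∧ ∀ s ∈ S, ∃ d ∈ D, ∃ r ∈ S, s = m d r}

theorem exists_mid_of_mem_iteratedHull {D : Set A} {a : A} (ha : a ∈ iteratedHull m D) :
    ∃ d ∈ D, ∃ r ∈ iteratedHull m D, a = m d r := by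
  obtain ⟨S, haS, hS⟩ := ha
  obtain ⟨d, hd, r, hr, rfl⟩ := hS a haS
  exact ⟨d, hd, r, ⟨S, hr, hS⟩, rfl⟩

theorem subset_iteratedHull (hm : IsMidpoint m) (D : Set A) : D ⊆ iteratedHull m D :=
  fun _ ha => ⟨D, ha, fun d hd => ⟨d, hd, d, hd, (hm.idem d).symm⟩⟩

theorem mid_mem_iteratedHull (hm : IsMidpoint m) {D : Set A}
    (hD : ∀ a ∈ D, ∀ b ∈ D, m a b ∈ D) {a b : A} (ha : a ∈ iteratedHull m D)
    (hb : b ∈ iteratedHull m D) : m a b ∈ iteratedHull m D := by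
  refine ⟨Set.image2 m (iteratedHull m D) (iteratedHull m D), ⟨a, ha, b, hb, rfl⟩, ?_⟩
  rintro _ ⟨a, ha, b, hb, rfl⟩
  obtain ⟨d, hd, r, hr, rfl⟩ := exists_mid_of_mem_iteratedHull ha
  obtain ⟨e, he, q, hq, rfl⟩ := exists_mid_of_mem_iteratedHull hb
  exact ⟨m d e, hD d hd e he, m r q, ⟨r, hr, q, hq, rfl⟩, hm.transpose d r e q⟩

theorem exists_isDyadicMean_of_mem_iteratedHull (hm : IsMidpoint m) {g : ι → A} {a : A}
    (ha : a ∈ iteratedHull m (dyadicHull m g)) (k : ℕ) :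
    ∃ (N : ℕ) (s : Multiset ι), ∃ r ∈ iteratedHull m (dyadicHull m g),
      IsDyadicMean m (N + k) (s.map g + 2 ^ N • {r}) a := by
  induction k generalizing a with
  | zero => exact ⟨0, 0, a, ha, by simp [IsDyadicMean]⟩
  | succ k ih =>
    obtain ⟨d, ⟨n, t, ht⟩, a', ha', rfl⟩ := exists_mid_of_mem_iteratedHull ha
    obtain ⟨N, s, r, hr, hs⟩ := ih ha'
    refine ⟨n + N, 2 ^ (N + k) • t + 2 ^ n • s, r, hr, ?_⟩
    have hd := ht.nsmul hm (N + k)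
    have ha' := hs.nsmul hm n
    rw [add_comm (N + k) n] at ha'
    simpa only [Multiset.map_add, Multiset.map_nsmul, nsmul_add, pow_add, mul_nsmul', add_assoc]
      using hd.mid ha'

end Hulls

theorem one_half_mem_unitInterval : (1 / 2 : ℝ) ∈ unitInterval :=
  unitInterval.div_mem zero_le_one zero_le_two one_le_two

theorem one_half_pow_mem_unitInterval (n : ℕ) : (1 / 2 : ℝ) ^ n ∈ unitInterval :=
  ⟨by positivity, pow_le_one₀ one_half_mem_unitInterval.1 one_half_mem_unitInterval.2⟩

theorem one_sub_mul_one_sub_mem_unitInterval {a b : ℝ} (ha : a ∈ unitInterval)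
    (hb : b ∈ unitInterval) :
    1 - (1 - a) * (1 - b) ∈ unitInterval :=
  Set.Icc.one_sub_mem (unitInterval.mul_mem (Set.Icc.one_sub_mem ha) (Set.Icc.one_sub_mem hb))

namespace IsWeight

variable {l k : ℕ → ℝ}

theorem hasSum (h : IsWeight l) : HasSum l 1 := by
  have hl : Summable l := by
    by_contra hn
    exact zero_ne_one ((tsum_eq_zero_of_not_summable hn).symm.trans h.2)
  exact h.2 ▸ hl.hasSum

theorem of_hasSum (h : ∀ i, 0 ≤ l i) (hs : HasSum l 1) : IsWeight l :=
  ⟨h, hs.tsum_eq⟩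

theorem le_one (h : IsWeight l) (i : ℕ) : l i ≤ 1 :=
  h.2 ▸ h.hasSum.summable.le_tsum i fun j _ => h.1 j

theorem single (k : ℕ) : IsWeight (Pi.single k 1) :=
  of_hasSum (Pi.single_nonneg.2 zero_le_one : (0 : ℕ → ℝ) ≤ Pi.single k 1) (hasSum_pi_single k 1)

theorem mix (hl : IsWeight l) (hk : IsWeight k) {t : ℝ} (ht : t ∈ unitInterval) :
    IsWeight (fun i => t * l i + (1 - t) * k i) := by
  refine of_hasSum (fun i => ?_) ?_
  · exact add_nonneg (mul_nonneg ht.1 (hl.1 i)) (mul_nonneg (sub_nonneg.2 ht.2) (hk.1 i))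
  · simpa using (hl.hasSum.mul_left t).add (hk.hasSum.mul_left (1 - t))

theorem pair {t : ℝ} (ht : t ∈ unitInterval) :
    IsWeight (fun i => if i = 0 then t else if i = 1 then 1 - t else 0) := by
  convert (single 0).mix (single 1) ht using 2 with i
  rcases i with _ | _ | i <;> simp

theorem summable_mul (hl : IsWeight l) {mu : ℕ → ℕ → ℝ} (hmu : ∀ i, IsWeight (mu i)) (j : ℕ) :
    Summable (fun i => l i * mu i j) :=
  .of_nonneg_of_le (fun i => mul_nonneg (hl.1 i) ((hmu i).1 j))
    (fun i => mul_le_of_le_one_right (hl.1 i) ((hmu i).le_one j)) hl.hasSum.summable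

theorem tsum_mul (hl : IsWeight l) {mu : ℕ → ℕ → ℝ} (hmu : ∀ i, IsWeight (mu i)) :
    IsWeight (fun j => ∑' i, l i * mu i j) := by
  have nonneg : ∀ p : ℕ × ℕ, 0 ≤ l p.1 * mu p.1 p.2 :=
    fun p => mul_nonneg (hl.1 _) ((hmu _).1 _)
  have row_sum : ∀ i, ∑' j, l i * mu i j = l i := fun i => by
    rw [tsum_mul_left, (hmu i).2, mul_one]
  have summable : Summable (fun p : ℕ × ℕ => l p.1 * mu p.1 p.2) :=
    (summable_prod_of_nonneg nonneg).2 ⟨fun i => (hmu i).hasSum.summable.mul_left (l i),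
      (summable_congr row_sum).2 hl.hasSum.summable⟩
  refine ⟨fun j => tsum_nonneg fun i => nonneg (i, j), ?_⟩
  calc ∑' j, ∑' i, l i * mu i j = ∑' i, ∑' j, l i * mu i j :=
        Summable.tsum_comm (f := fun i j => l i * mu i j) summable
    _ = 1 := by simp only [row_sum, hl.2]

end IsWeight

/-- The set of superconvex weights, which turns out to be the free iterative midpoint set on the
unit weights, see `existsUnique_midpointHom`. -/
abbrev Weight : Type := {l : ℕ → ℝ // IsWeight l}

namespace Weight

/-- The unit weight concentrated at `k`. -/
noncomputable def dirac (k : ℕ) : Weight := ⟨Pi.single k 1, .single k⟩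

/-- The midpoint of two weights. -/
noncomputable def mid (l k : Weight) : Weight :=
  ⟨fun i => (l.1 i + k.1 i) / 2, by
    convert l.2.mix k.2 one_half_mem_unitInterval using 2
    ring⟩

/-- The mixture `∑ lᵢ μᵢ` of the weights `μᵢ`. -/
noncomputable def bind (l : Weight) (mu : ℕ → Weight) : Weight :=
  ⟨fun j => ∑' i, l.1 i * (mu i).1 j, l.2.tsum_mul fun i => (mu i).2⟩

theorem isMidpoint_mid : IsMidpoint mid := by
  refine ⟨fun l => ?_, fun l k => ?_, fun l k l' k' => ?_⟩ <;> ext i <;> simp only [mid] <;> ring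

theorem cancellative_mid : Cancellative mid := fun l k k' h => by
  ext i
  have := congrFun (congrArg Subtype.val h) i
  simp only [mid] at this
  linarith

theorem exists_eq_mid {l d : Weight} (h : ∀ i, d.1 i ≤ 2 * l.1 i) : ∃ r, l = mid d r := by
  have hsum : HasSum (fun i => 2 * l.1 i - d.1 i) 1 := by
    have := (l.2.hasSum.mul_left 2).sub d.2.hasSum
    rwa [mul_one, show (2 : ℝ) - 1 = 1 by norm_num] at this
  refine ⟨⟨_, .of_hasSum (fun i => sub_nonneg.2 (h i)) hsum⟩, ?_⟩
  ext i
  simp only [mid]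
  ring

theorem bind_dirac (k : ℕ) (mu : ℕ → Weight) : (dirac k).bind mu = mu k := by
  ext j
  simp only [bind, dirac]
  rw [tsum_eq_single k fun i hi => by simp [hi]]
  simp

theorem bind_mid (l k : Weight) (mu : ℕ → Weight) :
    (mid l k).bind mu = mid (l.bind mu) (k.bind mu) := by
  ext j
  have hl := l.2.summable_mul (fun i => (mu i).2) j
  have hk := k.2.summable_mul (fun i => (mu i).2) j
  simp only [bind, mid]
  rw [← hl.tsum_add hk, ← tsum_div_const]
  exact tsum_congr fun i => by ring

/-- The uniform weight on the `2 ^ n` members of `c`, counted with multiplicity, is at most `2 * l`,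
strictly so on its support. -/
structure IsHalfMinorant (l : Weight) (n : ℕ) (c : Multiset ℕ) : Prop where
  card_eq : c.card = 2 ^ n
  count_lt : ∀ i ∈ c, (c.count i : ℝ) < l.1 i * 2 ^ (n + 1)

theorem exists_three_quarters_lt_sum_range (l : Weight) :
    ∃ K, 3 / 4 < ∑ i ∈ Finset.range K, l.1 i :=
  (l.2.hasSum.tendsto_sum_nat.eventually_const_lt (by norm_num)).exists

-- The multiplicity of `i < K` is the largest natural number strictly below `lᵢ 2ⁿ⁺¹`; rounding
-- loses at most `K ≤ 2ⁿ⁺¹ / 4` of the total `3/4 * 2ⁿ⁺¹`, and surplus elements are dropped.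
theorem exists_isHalfMinorant (l : Weight) : ∃ n c, l.IsHalfMinorant n c := by
  obtain ⟨K, hK⟩ := l.exists_three_quarters_lt_sum_range
  obtain ⟨n, hn⟩ := pow_unbounded_of_one_lt (2 * K : ℝ) one_lt_two
  let mult : ℕ → ℕ := fun i => ⌈l.1 i * 2 ^ (n + 1)⌉₊ - 1
  let C : Multiset ℕ := ∑ i ∈ Finset.range K, Multiset.replicate (mult i) i
  have le_mult : ∀ i, l.1 i * 2 ^ (n + 1) - 1 ≤ mult i := fun i => by
    have hceil : ⌈l.1 i * 2 ^ (n + 1)⌉₊ ≤ mult i + 1 := le_tsub_add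
    exact sub_le_iff_le_add.2 ((Nat.le_ceil _).trans (mod_cast hceil))
  have le_card : 2 ^ n ≤ C.card := by
    suffices (2 ^ n : ℝ) ≤ C.card by exact_mod_cast this
    calc (2 ^ n : ℝ) ≤ 3 / 4 * 2 ^ (n + 1) - K := by rw [pow_succ]; linarith
      _ ≤ (∑ i ∈ Finset.range K, l.1 i) * 2 ^ (n + 1) - K := by gcongr
      _ = ∑ i ∈ Finset.range K, (l.1 i * 2 ^ (n + 1) - 1) := by
        simp [Finset.sum_sub_distrib, Finset.sum_mul]
      _ ≤ ∑ i ∈ Finset.range K, (mult i : ℝ) := Finset.sum_le_sum fun i _ => le_mult i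
      _ = C.card := by simp [C]
  have count_le : ∀ i, C.count i ≤ mult i := fun i => by
    simp only [C, Multiset.count_sum', Multiset.count_replicate, Finset.sum_ite_eq']
    split_ifs <;> omega
  obtain ⟨c, hc, hcard⟩ := exists_le_card_eq le_card
  refine ⟨n, c, hcard, fun i hi => Nat.lt_ceil.1 ?_⟩
  have hle := (Multiset.count_le_of_le i hc).trans (count_le i)
  have hpos := Multiset.count_pos.2 hi
  simp only [mult] at hle
  omega

theorem IsHalfMinorant.exists_slack {l : Weight} {n : ℕ} {c : Multiset ℕ}
    (h : l.IsHalfMinorant n c) :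
    ∃ k : ℕ, ∀ i ∈ c, (c.count i : ℝ) ≤ (l.1 i - (1 / 2) ^ k) * 2 ^ (n + 1) := by
  have eventually_lt : ∀ᶠ k : ℕ in Filter.atTop, ∀ i ∈ c.toFinset,
      (c.count i : ℝ) < (l.1 i - (1 / 2) ^ k) * 2 ^ (n + 1) := by
    refine (Filter.eventually_all_finset _).2 fun i hi => ?_
    have hlim : Filter.Tendsto (fun k : ℕ => (l.1 i - (1 / 2) ^ k) * 2 ^ (n + 1)) Filter.atTop
        (nhds ((l.1 i - 0) * 2 ^ (n + 1))) :=
      ((tendsto_pow_atTop_nhds_zero_of_lt_one (by norm_num) (by norm_num)).const_sub _).mul_const _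
    exact hlim.eventually_const_lt (by simpa using h.count_lt i (Multiset.mem_toFinset.1 hi))
  obtain ⟨k, hk⟩ := eventually_lt.exists
  exact ⟨k, fun i hi => (hk i (Multiset.mem_toFinset.2 hi)).le⟩

end Weight

section Evaluation

variable {X : Type} {m : X → X → X} {x : ℕ → X}

/-- The unit weight at `i` paired with its value `x i`. -/
noncomputable def evalVertex (x : ℕ → X) (i : ℕ) : Weight × X := (.dirac i, x i)

/-- The graph of the evaluation `l ↦ ∑ lᵢ xᵢ`, generated from its vertices by finite midpoints
followed by infinite midpoint iteration. It is total by `exists_mem_evalGraph` and single-valued by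
`eq_of_mem_evalGraph`. -/
def evalGraph (m : X → X → X) (x : ℕ → X) : Set (Weight × X) :=
  iteratedHull (prodMid .mid m) (dyadicHull (prodMid .mid m) (evalVertex x))

theorem dyadicHull_subset_evalGraph (hm : IsMidpoint m) :
    dyadicHull (prodMid .mid m) (evalVertex x) ⊆ evalGraph m x :=
  subset_iteratedHull (Weight.isMidpoint_mid.prodMid hm) _

theorem evalVertex_mem_evalGraph (hm : IsMidpoint m) (i : ℕ) : evalVertex x i ∈ evalGraph m x :=
  dyadicHull_subset_evalGraph hm (mem_dyadicHull _ i)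

theorem mid_mem_evalGraph (hm : IsMidpoint m) :
    ∀ p ∈ evalGraph m x, ∀ q ∈ evalGraph m x, prodMid .mid m p q ∈ evalGraph m x :=
  have hmm := Weight.isMidpoint_mid.prodMid hm
  fun _ hp _ hq =>
    mid_mem_iteratedHull hmm (fun _ ha _ hb => mid_mem_dyadicHull hmm ha hb) hp hq

theorem sum_map_evalVertex (x : ℕ → X) (c : Multiset ℕ) (i : ℕ) :
    ((c.map (evalVertex x)).map fun p => p.1.1 i).sum = c.count i := by
  induction c using Multiset.induction with
  | empty => simp
  | cons a c ih =>
    rw [Multiset.map_cons, Multiset.map_cons, Multiset.sum_cons, ih, Multiset.count_cons]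
    simp only [evalVertex, Weight.dirac, Pi.single_apply]
    push_cast
    ring

theorem IsDyadicMean.coord_mul_two_pow {n : ℕ} {s : Multiset (Weight × X)} {p : Weight × X}
    (h : IsDyadicMean (prodMid .mid m) n s p) (i : ℕ) :
    p.1.1 i * 2 ^ n = (s.map fun q => q.1.1 i).sum :=
  h.mul_two_pow_eq_sum (f := fun q => q.1.1 i) fun _ _ => rfl

theorem Weight.IsHalfMinorant.coord_le {l : Weight} {n : ℕ} {c : Multiset ℕ}
    (hc : l.IsHalfMinorant n c) {d : Weight × X}
    (hd : IsDyadicMean (prodMid .mid m) n (c.map (evalVertex x)) d) (i : ℕ) :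
    d.1.1 i ≤ 2 * l.1 i := by
  have hdi : d.1.1 i * 2 ^ n = c.count i := by rw [hd.coord_mul_two_pow, sum_map_evalVertex]
  refine le_of_mul_le_mul_right ?_ (pow_pos two_pos n)
  by_cases hi : i ∈ c
  · calc d.1.1 i * 2 ^ n = c.count i := hdi
      _ ≤ l.1 i * 2 ^ (n + 1) := (hc.count_lt i hi).le
      _ = 2 * l.1 i * 2 ^ n := by ring
  · rw [hdi, Multiset.count_eq_zero_of_notMem hi, Nat.cast_zero]
    exact mul_nonneg (mul_nonneg zero_le_two (l.2.1 i)) (by positivity)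

theorem exists_isHalfMinorant_isDyadicMean (m : X → X → X) (x : ℕ → X) (l : Weight) :
    ∃ n c d, l.IsHalfMinorant n c ∧
      IsDyadicMean (prodMid .mid m) n (c.map (evalVertex x)) d := by
  obtain ⟨n, c, hc⟩ := l.exists_isHalfMinorant
  obtain ⟨d, hd⟩ := IsDyadicMean.exists_of_card_eq ((c.card_map (evalVertex x)).trans hc.card_eq)
  exact ⟨n, c, d, hc, hd⟩

theorem le_count_of_isDyadicMean {N k : ℕ} {s : Multiset ℕ} {p r : Weight × X}
    (h : IsDyadicMean (prodMid .mid m) (N + k) (s.map (evalVertex x) + 2 ^ N • {r}) p) (i : ℕ) :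
    (p.1.1 i - (1 / 2) ^ k) * 2 ^ (N + k) ≤ s.count i := by
  have hsum : p.1.1 i * 2 ^ (N + k) = s.count i + 2 ^ N * r.1.1 i := by
    rw [h.coord_mul_two_pow, Multiset.map_add, Multiset.sum_add, sum_map_evalVertex]
    simp [Multiset.map_nsmul, Multiset.sum_nsmul]
  have hr : 2 ^ N * r.1.1 i ≤ 2 ^ N := mul_le_of_le_one_right (by positivity) (r.1.2.le_one i)
  have hpow : (1 / 2 : ℝ) ^ k * 2 ^ (N + k) = 2 ^ N := by
    rw [pow_add, mul_left_comm, ← mul_pow]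
    norm_num
  rw [sub_mul, hsum, hpow]
  linarith

-- `p` is approximated by a dyadic mean of vertices up to less than the slack of `c`.
theorem exists_isDyadicMean_of_isHalfMinorant (hm : IsMidpoint m) {p : Weight × X}
    (hp : p ∈ evalGraph m x) {n : ℕ} {c : Multiset ℕ} (hc : p.1.IsHalfMinorant n c) :
    ∃ (N : ℕ) (s : Multiset (Weight × X)), (∀ q ∈ s, q ∈ evalGraph m x) ∧
      IsDyadicMean (prodMid .mid m) (N + n + 1) (2 ^ N • c.map (evalVertex x) + s) p := by
  have hmm := Weight.isMidpoint_mid.prodMid hm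
  obtain ⟨k, hk⟩ := hc.exists_slack
  obtain ⟨N, s, r, hr, hs⟩ := exists_isDyadicMean_of_mem_iteratedHull hmm hp k
  have hle : 2 ^ (N + k) • c ≤ 2 ^ (n + 1) • s := by
    refine Multiset.le_iff_count.2 fun i => ?_
    rw [Multiset.count_nsmul, Multiset.count_nsmul]
    by_cases hi : i ∈ c
    · suffices (2 ^ (N + k) * c.count i : ℝ) ≤ 2 ^ (n + 1) * s.count i by exact_mod_cast this
      calc (2 ^ (N + k) * c.count i : ℝ)
          ≤ 2 ^ (N + k) * ((p.1.1 i - (1 / 2) ^ k) * 2 ^ (n + 1)) := by gcongr; exact hk i hi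
        _ = 2 ^ (n + 1) * ((p.1.1 i - (1 / 2) ^ k) * 2 ^ (N + k)) := by ring
        _ ≤ 2 ^ (n + 1) * s.count i := by gcongr; exact le_count_of_isDyadicMean hs i
    · simp [Multiset.count_eq_zero_of_notMem hi]
  obtain ⟨s', hs'⟩ := Multiset.le_iff_exists_add.1 hle
  refine ⟨N + k, s'.map (evalVertex x) + 2 ^ (n + 1) • 2 ^ N • {r}, fun q hq => ?_, ?_⟩
  · rcases Multiset.mem_add.1 hq with hq | hq
    · obtain ⟨i, -, rfl⟩ := Multiset.mem_map.1 hq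
      exact evalVertex_mem_evalGraph hm i
    · obtain rfl := Multiset.mem_singleton.1
        (Multiset.mem_of_mem_nsmul (Multiset.mem_of_mem_nsmul hq))
      exact hr
  · rw [← add_assoc, ← Multiset.map_nsmul, ← Multiset.map_add, ← hs', Multiset.map_nsmul,
      ← nsmul_add]
    exact hs.nsmul hmm (n + 1)

theorem exists_mid_of_isHalfMinorant (hm : IsMidpoint m) {p d : Weight × X}
    (hp : p ∈ evalGraph m x) {n : ℕ} {c : Multiset ℕ} (hc : p.1.IsHalfMinorant n c)
    (hd : IsDyadicMean (prodMid .mid m) n (c.map (evalVertex x)) d) :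
    ∃ r ∈ evalGraph m x, p = prodMid .mid m d r := by
  have hmm := Weight.isMidpoint_mid.prodMid hm
  obtain ⟨N, s, hs, hp⟩ := exists_isDyadicMean_of_isHalfMinorant hm hp hc
  obtain ⟨d', r, hd', hr, rfl⟩ := IsDyadicMean.exists_mid_of_add hmm hp
    (by rw [Multiset.card_nsmul, Multiset.card_map, hc.card_eq, ← pow_add])
  obtain rfl : d = d' := (add_comm n N ▸ hd.nsmul hmm N).unique hmm hd'
  exact ⟨r, hr.mem_of_forall_mem (mid_mem_evalGraph hm) hs, rfl⟩

theorem exists_mem_evalGraph (hit : Iterative m) (x : ℕ → X) (l : Weight) :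
    ∃ a, (l, a) ∈ evalGraph m x := by
  have split : ∀ l : Weight, ∃ d ∈ dyadicHull (prodMid .mid m) (evalVertex x), ∃ r,
      l = .mid d.1 r := fun l => by
    obtain ⟨n, c, d, hc, hd⟩ := exists_isHalfMinorant_isDyadicMean m x l
    exact ⟨d, ⟨n, c, hd⟩, Weight.exists_eq_mid (hc.coord_le hd)⟩
  choose d hd r hr using split
  obtain ⟨u, hu, -⟩ := hit Weight fun l => ((d l).2, r l)
  refine ⟨u l, Set.range fun l => (l, u l), ⟨l, rfl⟩, ?_⟩
  rintro _ ⟨l, rfl⟩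
  exact ⟨d l, hd l, _, ⟨r l, rfl⟩, Prod.ext (hr l) (hu l)⟩

theorem eq_of_mem_evalGraph (hm : IsMidpoint m) (hit : Iterative m) {l : Weight} {a b : X}
    (ha : (l, a) ∈ evalGraph m x) (hb : (l, b) ∈ evalGraph m x) : a = b := by
  refine hit.eq_of_coinduction (fun a b => ∃ l, (l, a) ∈ evalGraph m x ∧ (l, b) ∈ evalGraph m x)
    ?_ ⟨l, ha, hb⟩
  rintro a b ⟨l, ha, hb⟩
  obtain ⟨n, c, d, hc, hd⟩ := exists_isHalfMinorant_isDyadicMean m x l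
  obtain ⟨⟨k, a'⟩, ha', heqa⟩ := exists_mid_of_isHalfMinorant hm ha hc hd
  obtain ⟨⟨k', b'⟩, hb', heqb⟩ := exists_mid_of_isHalfMinorant hm hb hc hd
  obtain ⟨hl, rfl⟩ := Prod.ext_iff.1 heqa
  obtain ⟨hl', rfl⟩ := Prod.ext_iff.1 heqb
  obtain rfl : k = k' := Weight.cancellative_mid _ _ _ (hl.symm.trans hl')
  exact ⟨d.2, a', b', ⟨k, ha', hb'⟩, rfl, rfl⟩

theorem midpointHom_eq_of_mem_evalGraph (hit : Iterative m) {h : Weight → X}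
    (hdirac : ∀ i, h (.dirac i) = x i) (hmid : ∀ l k, h (.mid l k) = m (h l) (h k))
    {p : Weight × X} (hp : p ∈ evalGraph m x) : h p.1 = p.2 := by
  have eq_on_hull : dyadicHull (prodMid .mid m) (evalVertex x) ⊆ {p | h p.1 = p.2} :=
    dyadicHull_subset (fun p hp q hq => (hmid p.1 q.1).trans (congrArg₂ m hp hq)) hdirac
  refine hit.eq_of_coinduction (fun a b => ∃ p ∈ evalGraph m x, a = h p.1 ∧ b = p.2) ?_
    ⟨p, hp, rfl, rfl⟩
  rintro _ _ ⟨p, hp, rfl, rfl⟩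
  obtain ⟨d, hd, r, hr, rfl⟩ := exists_mid_of_mem_iteratedHull hp
  have hd : h d.1 = d.2 := eq_on_hull hd
  exact ⟨d.2, h r.1, r.2, ⟨r, hr, rfl, rfl⟩, (hmid d.1 r.1).trans (by rw [hd]), rfl⟩

theorem existsUnique_midpointHom (hm : IsMidpoint m) (hit : Iterative m) (x : ℕ → X) :
    ∃! h : Weight → X,
      (∀ i, h (.dirac i) = x i) ∧ ∀ l k, h (.mid l k) = m (h l) (h k) := by
  choose h hmem using exists_mem_evalGraph hit x
  refine ⟨h, ⟨fun i => ?_, fun l k => ?_⟩, fun h' hh' => funext fun l => ?_⟩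
  · exact eq_of_mem_evalGraph hm hit (hmem _) (evalVertex_mem_evalGraph hm i)
  · exact eq_of_mem_evalGraph hm hit (hmem _) (mid_mem_evalGraph hm _ (hmem l) _ (hmem k))
  · exact midpointHom_eq_of_mem_evalGraph hit hh'.1 hh'.2 (hmem l)

end Evaluation

section StickBreaking

/-- The weight `i ↦ λᵢ ∏_{k ≤ j < i} (1 - λⱼ)` on `i ≥ k`: a stick of unit length is broken
successively at the fractions `λₖ, λₖ₊₁, …` of what remains. -/
noncomputable def stickBreaking (lam : ℕ → ℝ) (k i : ℕ) : ℝ :=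
  if i < k then 0 else lam i * ∏ j ∈ Finset.Ico k i, (1 - lam j)

variable {lam : ℕ → ℝ}

theorem prod_Ico_one_sub_mem_unitInterval (hlam : ∀ i, lam i ∈ unitInterval) (k n : ℕ) :
    ∏ j ∈ Finset.Ico k n, (1 - lam j) ∈ unitInterval :=
  unitInterval.prod_mem fun j _ => Set.Icc.one_sub_mem (hlam j)

theorem tendsto_prod_Ico_one_sub (hlam : ∀ i, lam i ≠ 1)
    (hlim : Filter.Tendsto (fun n => ∏ j ∈ Finset.range n, (1 - lam j)) Filter.atTop (nhds 0))
    (k : ℕ) :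
    Filter.Tendsto (fun n => ∏ j ∈ Finset.Ico k n, (1 - lam j)) Filter.atTop (nhds 0) := by
  have hk : ∏ j ∈ Finset.range k, (1 - lam j) ≠ 0 :=
    Finset.prod_ne_zero_iff.2 fun j _ => sub_ne_zero.2 (hlam j).symm
  rw [← zero_div (∏ j ∈ Finset.range k, (1 - lam j))]
  refine (hlim.div_const _).congr' ?_
  filter_upwards [Filter.eventually_ge_atTop k] with n hn
  rw [div_eq_iff hk, mul_comm, Finset.prod_range_mul_prod_Ico _ hn]

theorem sum_range_stickBreaking (lam : ℕ → ℝ) {k n : ℕ} (hkn : k ≤ n) :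
    ∑ i ∈ Finset.range n, stickBreaking lam k i = 1 - ∏ j ∈ Finset.Ico k n, (1 - lam j) := by
  induction n, hkn using Nat.le_induction with
  | base =>
    rw [Finset.Ico_self, Finset.prod_empty, sub_self]
    exact Finset.sum_eq_zero fun i hi => if_pos (Finset.mem_range.1 hi)
  | succ n hkn ih =>
    rw [Finset.sum_range_succ, ih, Finset.prod_Ico_succ_top hkn, stickBreaking,
      if_neg hkn.not_gt]
    ring

theorem isWeight_stickBreaking (hlam : ∀ i, lam i ∈ unitInterval) {k : ℕ}
    (hlim : Filter.Tendsto (fun n => ∏ j ∈ Finset.Ico k n, (1 - lam j)) Filter.atTop (nhds 0)) :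
    IsWeight (stickBreaking lam k) := by
  have nonneg : ∀ i, 0 ≤ stickBreaking lam k i := fun i => by
    rw [stickBreaking]
    split_ifs
    exacts [le_rfl, mul_nonneg (hlam i).1 (prod_Ico_one_sub_mem_unitInterval hlam k i).1]
  refine .of_hasSum nonneg ((hasSum_iff_tendsto_nat_of_nonneg nonneg 1).2 ?_)
  rw [← sub_zero (1 : ℝ)]
  refine (hlim.const_sub 1).congr' ?_
  filter_upwards [Filter.eventually_ge_atTop k] with n hn
  exact (sum_range_stickBreaking lam hn).symm

theorem stickBreaking_eq_mix (lam : ℕ → ℝ) (k : ℕ) :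
    stickBreaking lam k =
      fun i => lam k * (Pi.single k 1 : ℕ → ℝ) i + (1 - lam k) * stickBreaking lam (k + 1) i := by
  ext i
  rcases lt_trichotomy i k with hik | rfl | hki
  · simp [stickBreaking, hik, hik.ne, hik.trans k.lt_succ_self]
  · simp [stickBreaking]
  · rw [stickBreaking, stickBreaking, if_neg hki.not_gt, if_neg (Nat.succ_le_of_lt hki).not_gt,
      Pi.single_eq_of_ne hki.ne', Finset.prod_eq_prod_Ico_succ_bot hki]
    ring

end StickBreaking

namespace SuperconvexStr

variable {X : Type} (S : SuperconvexStr X) {a b t : ℝ}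

theorem comb_single (k : ℕ) (x : ℕ → X) : S.comb (Pi.single k 1) x = x k :=
  S.proj _ (.single k) k (Pi.single_eq_same k 1) (fun _ hi => Pi.single_eq_of_ne hi 1) x

theorem comb_mix {l k : ℕ → ℝ} (hl : IsWeight l) (hk : IsWeight k) (ht : t ∈ unitInterval)
    (x : ℕ → X) :
    S.comb (fun i => t * l i + (1 - t) * k i) x = S.pair t (S.comb l x) (S.comb k x) := by
  let mu : ℕ → ℕ → ℝ := fun i => if i = 0 then l else k
  have hmu : ∀ i, IsWeight (mu i) := fun i => by
    by_cases hi : i = 0 <;> simpa only [mu, hi, if_true, if_false]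
  have hmix := S.compos _ (.pair ht) mu hmu x
  simp only [mu, apply_ite (S.comb · x)] at hmix
  refine Eq.trans (congrArg (S.comb · x) (funext fun j => ?_)) hmix.symm
  rw [tsum_eq_sum (s := Finset.range 2) fun i hi => ?_]
  · simp [Finset.sum_range_succ]
  · simp only [Finset.mem_range, not_lt] at hi
    rw [if_neg (by omega), if_neg (by omega), zero_mul]

theorem comb_mid (l k : Weight) (x : ℕ → X) :
    S.comb (l.mid k).1 x = S.pair (1 / 2) (S.comb l.1 x) (S.comb k.1 x) := by
  rw [← S.comb_mix l.2 k.2 one_half_mem_unitInterval]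
  congr 1
  ext i
  simp only [Weight.mid]
  ring

theorem pair_one (u v : X) : S.pair 1 u v = u := by
  refine S.proj _ (.pair unitInterval.one_mem) 0 rfl (fun i hi => ?_) _
  simp [hi]

theorem pair_zero (u v : X) : S.pair 0 u v = v := by
  refine S.proj _ (.pair unitInterval.zero_mem) 1 (by simp) (fun i hi => ?_) _
  simp [hi]

theorem pair_symm (ht : t ∈ unitInterval) (u v : X) : S.pair (1 - t) v u = S.pair t u v := by
  suffices ∀ x : ℕ → X, S.pair (1 - t) (x 1) (x 0) = S.pair t (x 0) (x 1) from
    this fun i => if i = 0 then u else v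
  intro x
  rw [← S.comb_single 0 x, ← S.comb_single 1 x, ← S.comb_mix (.single 1) (.single 0)
    (Set.Icc.one_sub_mem ht), ← S.comb_mix (.single 0) (.single 1) ht]
  congr 1
  ext i
  ring

theorem pair_self (ht : t ∈ unitInterval) (u : X) : S.pair t u u = u := by
  have hmix := S.comb_mix (.single 0) (.single 0) ht fun _ => u
  rw [S.comb_single] at hmix
  refine hmix.symm.trans ((congrArg (S.comb · _) (funext fun i => ?_)).trans (S.comb_single 0 _))
  ring

-- For `a = b = 0` the inner weight on the right is the junk value `0 / 0 = 0`, a valid weight.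
theorem pair_assoc (ha : a ∈ unitInterval) (hb : b ∈ unitInterval) (q r v : X) :
    S.pair a q (S.pair b r v) =
      S.pair (1 - (1 - a) * (1 - b)) (S.pair (a / (1 - (1 - a) * (1 - b))) q r) v := by
  suffices ∀ x : ℕ → X, S.pair a (x 0) (S.pair b (x 1) (x 2)) =
      S.pair (1 - (1 - a) * (1 - b))
        (S.pair (a / (1 - (1 - a) * (1 - b))) (x 0) (x 1)) (x 2) from
    this fun i => if i = 0 then q else if i = 1 then r else v
  intro x
  have hs := one_sub_mul_one_sub_mem_unitInterval ha hb
  have has : a ≤ 1 - (1 - a) * (1 - b) := by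
    linarith [mul_nonneg (sub_nonneg.2 ha.2) hb.1]
  have hc := unitInterval.div_mem ha.1 hs.1 has
  have hsc : (1 - (1 - a) * (1 - b)) * (a / (1 - (1 - a) * (1 - b))) = a :=
    mul_div_cancel_of_imp' fun h => le_antisymm (h ▸ has) ha.1
  have h₀ := IsWeight.single 0
  have h₁ := IsWeight.single 1
  have h₂ := IsWeight.single 2
  rw [← S.comb_single 0 x, ← S.comb_single 1 x, ← S.comb_single 2 x, ← S.comb_mix h₁ h₂ hb,
    ← S.comb_mix h₀ h₁ hc, ← S.comb_mix h₀ (h₁.mix h₂ hb) ha, ← S.comb_mix (h₀.mix h₁ hc) h₂ hs]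
  congr 1
  ext i
  linear_combination ((Pi.single 1 1 : ℕ → ℝ) i - (Pi.single 0 1 : ℕ → ℝ) i) * hsc

theorem pair_pair_left_self (ha : a ∈ unitInterval) (hb : b ∈ unitInterval) (u v : X) :
    S.pair a u (S.pair b u v) = S.pair (1 - (1 - a) * (1 - b)) u v := by
  have hs := one_sub_mul_one_sub_mem_unitInterval ha hb
  rw [S.pair_assoc ha hb, S.pair_self (unitInterval.div_mem ha.1 hs.1 ?_)]
  linarith [mul_nonneg (sub_nonneg.2 ha.2) hb.1]

theorem pair_pair_right_self (ha : a ∈ unitInterval) (hb : b ∈ unitInterval) (u v : X) :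
    S.pair a (S.pair b u v) v = S.pair (a * b) u v := by
  rw [← S.pair_symm ha, ← S.pair_symm hb, ← S.pair_symm (unitInterval.mul_mem ha hb),
    S.pair_pair_left_self (Set.Icc.one_sub_mem ha) (Set.Icc.one_sub_mem hb), sub_sub_cancel,
    sub_sub_cancel]

section Cancellation

theorem eq_of_pair_half_pow_eq (h : _root_.Cancellative (S.pair (1 / 2))) {n : ℕ} {x y z : X}
    (hxy : S.pair ((1 / 2) ^ n) x z = S.pair ((1 / 2) ^ n) y z) : x = y := by
  induction n with
  | zero => simpa only [pow_zero, pair_one] using hxy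
  | succ n ih =>
    have split : ∀ u, S.pair ((1 / 2) ^ (n + 1)) u z =
        S.pair (1 / 2) z (S.pair ((1 / 2) ^ n) u z) := fun u => by
      rw [pow_succ', ← S.pair_pair_right_self one_half_mem_unitInterval
        (one_half_pow_mem_unitInterval n), ← S.pair_symm one_half_mem_unitInterval, sub_half]
    rw [split, split] at hxy
    exact ih (h _ _ _ hxy)

theorem cancellative_of_cancellative_pair_half (h : _root_.Cancellative (S.pair (1 / 2))) :
    S.Cancellative := by
  intro a ha₀ ha₁ x y z hxy
  obtain ⟨n, hn⟩ := exists_pow_lt_of_lt_one ha₀ (one_half_lt_one (α := ℝ))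
  have ha : a ∈ unitInterval := ⟨ha₀.le, ha₁.le⟩
  have hna := unitInterval.div_mem (one_half_pow_mem_unitInterval n).1 ha₀.le hn.le
  have extract : ∀ u, S.pair ((1 / 2) ^ n / a) (S.pair a u z) z = S.pair ((1 / 2) ^ n) u z :=
    fun u => by rw [S.pair_pair_right_self hna ha, div_mul_cancel₀ _ ha₀.ne']
  refine S.eq_of_pair_half_pow_eq h (n := n) (z := z) ?_
  rw [← extract x, ← extract y, hxy]

end Cancellation

section Iteration

variable {lam : ℕ → ℝ}

/-- `x` solves the recursion `xᵢ = λᵢ yᵢ + (1 - λᵢ) xᵢ₊₁` of superconvex iterativity. -/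
def IsUnfolding (lam : ℕ → ℝ) (y x : ℕ → X) : Prop :=
  ∀ i, x i = S.pair (lam i) (y i) (x (i + 1))

theorem isUnfolding_comb_stickBreaking (hlam : ∀ i, lam i ∈ unitInterval)
    (hlim : ∀ k, Filter.Tendsto (fun n => ∏ j ∈ Finset.Ico k n, (1 - lam j)) Filter.atTop
      (nhds 0)) (y : ℕ → X) :
    S.IsUnfolding lam y fun k => S.comb (stickBreaking lam k) y := fun k => by
  have hmix := S.comb_mix (.single k) (isWeight_stickBreaking hlam (hlim (k + 1))) (hlam k) y
  rwa [← stickBreaking_eq_mix, S.comb_single] at hmix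

theorem exists_unroll (hlam : ∀ i, lam i ∈ unitInterval) (ha : a ∈ unitInterval) (y : ℕ → X)
    (q : X) {n N : ℕ} (hnN : n ≤ N) :
    ∃ r, ∀ x, S.IsUnfolding lam y x →
      S.pair a q (x n) =
        S.pair (1 - (1 - a) * ∏ j ∈ Finset.Ico n N, (1 - lam j)) r (x N) := by
  induction N, hnN using Nat.le_induction with
  | base => exact ⟨q, fun x _ => by simp⟩
  | succ N hnN ih =>
    obtain ⟨r, hr⟩ := ih
    have hb : 1 - (1 - a) * ∏ j ∈ Finset.Ico n N, (1 - lam j) ∈ unitInterval :=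
      Set.Icc.one_sub_mem
        (unitInterval.mul_mem (Set.Icc.one_sub_mem ha) (prod_Ico_one_sub_mem_unitInterval hlam n N))
    obtain ⟨r', hr'⟩ : ∃ r', ∀ v, S.pair _ r (S.pair (lam N) (y N) v) = S.pair _ r' v :=
      ⟨_, S.pair_assoc hb (hlam N) r (y N)⟩
    refine ⟨r', fun x hx => ?_⟩
    rw [hr x hx, hx N, hr', sub_sub_cancel, mul_assoc, ← Finset.prod_Ico_succ_top hnN]

theorem exists_eq_pair_half (hlam : ∀ i, lam i ∈ unitInterval)
    (hlim : ∀ k, Filter.Tendsto (fun n => ∏ j ∈ Finset.Ico k n, (1 - lam j)) Filter.atTop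
      (nhds 0)) (ha : a ∈ unitInterval) (y : ℕ → X) (q : X) (n : ℕ) :
    ∃ r, ∃ b ∈ unitInterval, ∃ N, ∀ x, S.IsUnfolding lam y x →
      S.pair a q (x n) = S.pair (1 / 2) r (S.pair b r (x N)) := by
  obtain ⟨N, hN, hnN⟩ := (((hlim n).eventually_lt_const one_half_pos).and
    (Filter.eventually_ge_atTop n)).exists
  have hP := prod_Ico_one_sub_mem_unitInterval hlam n N
  obtain ⟨r, hr⟩ := S.exists_unroll hlam ha y q hnN
  have hb : 1 - 2 * ((1 - a) * ∏ j ∈ Finset.Ico n N, (1 - lam j)) ∈ unitInterval := by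
    have hPa := mul_le_of_le_one_left hP.1 (Set.Icc.one_sub_mem ha).2
    have := mul_nonneg (Set.Icc.one_sub_mem ha).1 hP.1
    constructor <;> linarith
  refine ⟨r, _, hb, N, fun x hx => ?_⟩
  rw [hr x hx, S.pair_pair_left_self one_half_mem_unitInterval hb]
  congr 1
  ring

theorem IsUnfolding.eq_of_iterative {S : SuperconvexStr X}
    (hit : _root_.Iterative (S.pair (1 / 2))) (hlam : ∀ i, lam i ∈ unitInterval)
    (hlim : ∀ k, Filter.Tendsto (fun n => ∏ j ∈ Finset.Ico k n, (1 - lam j)) Filter.atTop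
      (nhds 0)) {x y z : ℕ → X} (hx : S.IsUnfolding lam y x) (hz : S.IsUnfolding lam y z) :
    x = z := by
  ext n
  refine hit.eq_of_coinduction (fun u v => ∃ a ∈ unitInterval, ∃ q n,
    u = S.pair a q (x n) ∧ v = S.pair a q (z n)) ?_
    ⟨0, unitInterval.zero_mem, x n, n, (S.pair_zero _ _).symm, (S.pair_zero _ _).symm⟩
  rintro _ _ ⟨a, ha, q, n, rfl, rfl⟩
  obtain ⟨r, b, hb, N, hr⟩ := S.exists_eq_pair_half hlam hlim ha y q n
  exact ⟨r, _, _, ⟨b, hb, r, N, rfl, rfl⟩, hr x hx, hr z hz⟩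

theorem iterative_of_iterative_pair_half (hit : _root_.Iterative (S.pair (1 / 2))) :
    S.Iterative := by
  intro x y lam mu hlam _ hadd hx hlim
  obtain rfl : mu = fun i => 1 - lam i := funext fun i => eq_sub_of_add_eq' (hadd i)
  have hmem : ∀ i, lam i ∈ unitInterval := fun i => ⟨(hlam i).1.le, (hlam i).2.le⟩
  have hlim := tendsto_prod_Ico_one_sub (fun i => (hlam i).2.ne) hlim
  have hstick : stickBreaking lam 0 = fun i => lam i * ∏ j ∈ Finset.range i, (1 - lam j) := by
    ext i
    rw [stickBreaking, if_neg i.not_lt_zero, Finset.range_eq_Ico]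
  rw [← hstick]
  exact congrFun (IsUnfolding.eq_of_iterative hit hmem hlim hx
    (S.isUnfolding_comb_stickBreaking hmem hlim y)) 0

end Iteration

end SuperconvexStr

section Existence

variable {X : Type} {m : X → X → X}

/-- The mean `∑ lᵢ xᵢ` in an iterative midpoint set, as the unique extension of `x` to a midpoint
homomorphism on `Weight`. -/
noncomputable def weightedMean (hm : IsMidpoint m) (hit : Iterative m) (x : ℕ → X) : Weight → X :=
  (existsUnique_midpointHom hm hit x).choose

variable (hm : IsMidpoint m) (hit : Iterative m)

theorem weightedMean_dirac (x : ℕ → X) (i : ℕ) : weightedMean hm hit x (.dirac i) = x i :=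
  (existsUnique_midpointHom hm hit x).choose_spec.1.1 i

theorem weightedMean_mid (x : ℕ → X) (l k : Weight) :
    weightedMean hm hit x (.mid l k) = m (weightedMean hm hit x l) (weightedMean hm hit x k) :=
  (existsUnique_midpointHom hm hit x).choose_spec.1.2 l k

theorem eq_weightedMean {x : ℕ → X} {h : Weight → X} (hdirac : ∀ i, h (.dirac i) = x i)
    (hmid : ∀ l k, h (.mid l k) = m (h l) (h k)) : h = weightedMean hm hit x :=
  (existsUnique_midpointHom hm hit x).choose_spec.2 h ⟨hdirac, hmid⟩

theorem weightedMean_bind (x : ℕ → X) (l : Weight) (mu : ℕ → Weight) :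
    weightedMean hm hit x (l.bind mu) =
      weightedMean hm hit (fun i => weightedMean hm hit x (mu i)) l := by
  refine congrFun (eq_weightedMean hm hit (h := fun l => weightedMean hm hit x (l.bind mu))
    (fun i => ?_) fun l k => ?_) l
  · rw [Weight.bind_dirac]
  · rw [Weight.bind_mid, weightedMean_mid]

open Classical in
/-- The superconvex structure of an iterative midpoint set, given by `weightedMean` on genuine
weights and by the junk value `x 0` on other sequences. -/
noncomputable def superconvexStrOfIterative (hm : IsMidpoint m) (hit : Iterative m) :
    SuperconvexStr X where
  comb l x := if h : IsWeight l then weightedMean hm hit x ⟨l, h⟩ else x 0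
  proj l hl k hk hne x := by
    have hdirac : (⟨l, hl⟩ : Weight) = Weight.dirac k := by
      ext i
      rcases eq_or_ne i k with rfl | hi
      · simpa [Weight.dirac] using hk
      · simpa [Weight.dirac, hi] using hne i hi
    rw [dif_pos hl, hdirac, weightedMean_dirac]
  compos l hl mu hmu x := by
    simp only [dif_pos hl, dif_pos (hmu _), dif_pos (hl.tsum_mul hmu)]
    exact (weightedMean_bind hm hit x ⟨l, hl⟩ fun i => ⟨mu i, hmu i⟩).symm

theorem superconvexStrOfIterative_comb (l : Weight) (x : ℕ → X) :
    (superconvexStrOfIterative hm hit).comb l.1 x = weightedMean hm hit x l :=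
  dif_pos l.2

theorem superconvexStrOfIterative_pair_half :
    (superconvexStrOfIterative hm hit).pair (1 / 2) = m := by
  ext u v
  suffices ∀ x : ℕ → X,
      (superconvexStrOfIterative hm hit).pair (1 / 2) (x 0) (x 1) = m (x 0) (x 1) from
    this fun i => if i = 0 then u else v
  intro x
  rw [← weightedMean_dirac hm hit x 0, ← weightedMean_dirac hm hit x 1, ← weightedMean_mid hm hit,
    ← superconvexStrOfIterative_comb, ← superconvexStrOfIterative_comb,
    ← superconvexStrOfIterative_comb, SuperconvexStr.comb_mid]

theorem comb_eq_weightedMean {S : SuperconvexStr X}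
    (hS : ∀ u v, S.pair (1 / 2) u v = m u v) (l : Weight) (x : ℕ → X) :
    S.comb l.1 x = weightedMean hm hit x l := by
  refine congrFun (eq_weightedMean hm hit (h := fun l => S.comb l.1 x)
    (fun i => S.comb_single i x) fun l k => ?_) l
  rw [S.comb_mid, hS]

end Existence

/-- Every iterative midpoint set carries exactly one superconvex structure
whose binary ½-½ combination is the midpoint operation; this structure is
iterative, and it is cancellative whenever the midpoint operation is. -/
theorem unique_superconvex_extension (X : Type) (m : X → X → X)
    (hm : IsMidpoint m) (hit : Iterative m) :
    ∃ S : SuperconvexStr X,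
      (∀ x y : X, S.pair (1 / 2) x y = m x y) ∧
      S.Iterative ∧
      (Cancellative m → S.Cancellative) ∧
      ∀ S' : SuperconvexStr X, (∀ x y : X, S'.pair (1 / 2) x y = m x y) →
        ∀ lam, IsWeight lam → ∀ x : ℕ → X, S'.comb lam x = S.comb lam x := by
  have hhalf := superconvexStrOfIterative_pair_half hm hit
  refine ⟨superconvexStrOfIterative hm hit, fun x y => congrFun₂ hhalf x y, ?_, fun hcan => ?_,
    fun S' hS' lam hlam x => ?_⟩
  · exact SuperconvexStr.iterative_of_iterative_pair_half _ (hhalf.symm ▸ hit)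
  · exact SuperconvexStr.cancellative_of_cancellative_pair_half _ (hhalf.symm ▸ hcan)
  · exact (comb_eq_weightedMean hm hit hS' ⟨lam, hlam⟩ x).trans
      (superconvexStrOfIterative_comb hm hit ⟨lam, hlam⟩ x).symm
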